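/- Fix n ≥ 2. For every ε > 0 there exists δ ∈ (0,1/4) such that the following holds: if μ is a Borel measure on ℝⁿ and there exist M₁,…,M_n > 0 and Borel probability measures ℙ₁,…,ℙ_n on Γ(ℝⁿ), each ℙ_j concentrated on the set Γ_j(δ) of C(e_j, 1−δ)-curves with respect to the identity, such that μ ≤ M_j · ν(ℙ_j) for all 1 ≤ j ≤ n, then for all m ≥ 0, ∑_{Q ∈ 𝒟_m} (μ(Q)/|Q|)^{n/(n−1)} |Q| ≤ K(n,ε) · 2^{mε} · ∏_{j=1}^n M_j^{1/(n−1)}, where K(n,ε) is a constant depending only on n and ε. -/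

import Mathlib

open MeasureTheory Metric Set Filter Topology ENNReal NNReal
open scoped RealInnerProductSpace

noncomputable section

namespace BKO

/-- `ℝⁿ` with the Euclidean metric. -/
abbrev E (n : ℕ) : Type := EuclideanSpace ℝ (Fin n)

variable {X : Type*} [MetricSpace X]

/-- A set `G ⊆ ℝ × X` is the graph of a curve fragment if all first coordinates lie
in `[0,1]` and it is the graph of a `2`-biLipschitz function defined on a subset of `[0,1]`. -/
def IsFragmentGraph (X : Type*) [MetricSpace X] (G : Set (ℝ × X)) : Prop :=
  (∀ p ∈ G, p.1 ∈ Set.Icc (0:ℝ) 1) ∧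
  ∀ p ∈ G, ∀ q ∈ G, |p.1 - q.1| ≤ 2 * dist p.2 q.2 ∧ dist p.2 q.2 ≤ 2 * |p.1 - q.1|

/-- The space `Γ(X)` of curve fragments, identified with their graphs (nonempty compact
subsets of `[0,1] × X`), with the Hausdorff metric `d_Γ(γ₁,γ₂) = d_H(gr γ₁, gr γ₂)`. -/
def Fragment (X : Type*) [MetricSpace X] : Type _ :=
  {G : TopologicalSpace.NonemptyCompacts (ℝ × X) // IsFragmentGraph X (G : Set (ℝ × X))}

instance : MetricSpace (Fragment X) :=
  inferInstanceAs (MetricSpace {G : TopologicalSpace.NonemptyCompacts (ℝ × X) // _})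

instance : MeasurableSpace (Fragment X) := borel _
instance : BorelSpace (Fragment X) := ⟨rfl⟩

namespace Fragment

/-- The graph of a curve fragment. -/
def graph (γ : Fragment X) : Set (ℝ × X) := (γ.1 : Set (ℝ × X))

/-- The (compact) domain of a curve fragment. -/
def dom (γ : Fragment X) : Set ℝ := Prod.fst '' γ.graph

/-- The image of a curve fragment. -/
def im (γ : Fragment X) : Set X := Prod.snd '' γ.graph

/-- The function `dom γ → X` determined by the graph (junk value off the domain). -/
def fn (γ : Fragment X) (t : ℝ) : X :=
  @dite X (∃ x, (t, x) ∈ γ.graph) (Classical.dec _)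
    (fun h => h.choose) (fun _ => γ.1.nonempty.choose.2)

/-- `γ_* 𝓛¹`: the pushforward under `γ` of Lebesgue measure restricted to `dom γ`. -/
def measure [MeasurableSpace X] (γ : Fragment X) : Measure X :=
  (volume.restrict γ.dom).map γ.fn

end Fragment

/-- The measure `ν(ℙ)`, `ν(ℙ)(B) = ∫ γ_*𝓛¹(B) dℙ(γ)`. -/
def nu [MeasurableSpace X] (ℙ : Measure (Fragment X)) : Measure X :=
  ℙ.bind Fragment.measure

/-- The cone `C(w,θ) = {v : |⟨v,w⟩| ≥ θ‖v‖}`. -/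
def cone {n : ℕ} (w : E n) (θ : ℝ) : Set (E n) := {v | θ * ‖v‖ ≤ |⟪v, w⟫|}

/-- A cone in `ℝⁿ` is a set of the form `C(w,θ)` with `w ∈ Sⁿ⁻¹`, `θ ∈ (0,1)`. -/
def IsCone {n : ℕ} (C : Set (E n)) : Prop :=
  ∃ (w : E n) (θ : ℝ), ‖w‖ = 1 ∧ θ ∈ Set.Ioo (0:ℝ) 1 ∧ C = cone w θ

/-- `γ` is a `C`-curve with respect to `φ`. -/
def IsConeCurve {n : ℕ} (φ : X → E n) (C : Set (E n)) (γ : Fragment X) : Prop :=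
  ∃ δ > (0:ℝ), ∀ p ∈ γ.graph, ∀ q ∈ γ.graph,
    φ p.2 - φ q.2 ∈ C \ Metric.ball 0 (δ * |p.1 - q.1|)

/-- `ℙ` is a `C`-Alberti representation of `μ` with respect to `φ`. -/
def IsConeAlbertiRep [MeasurableSpace X] {n : ℕ} (μ : Measure X) (φ : X → E n)
    (C : Set (E n)) (ℙ : Measure (Fragment X)) : Prop :=
  IsProbabilityMeasure ℙ ∧ μ ≪ nu ℙ ∧ ∀ᵐ γ ∂ℙ, IsConeCurve φ C γ

/-- `S` is `C`-null with respect to `φ`: every `C`-curve meets `S` in `𝓗¹`-measure zero. -/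
def ConeNull [MeasurableSpace X] [BorelSpace X] {n : ℕ} (φ : X → E n) (C : Set (E n))
    (S : Set X) : Prop :=
  ∀ γ : Fragment X, IsConeCurve φ C γ → μH[1] (γ.im ∩ S) = 0

/-- Cones `C₁,…,C_m` are independent. -/
def IndepCones {n m : ℕ} (C : Fin m → Set (E n)) : Prop :=
  ∀ v : Fin m → E n, (∀ i, v i ∈ C i ∧ v i ≠ 0) → LinearIndependent ℝ v

/-- `μ` has `n` independent Alberti representations. -/
def HasIndepAlberti [MeasurableSpace X] (μ : Measure X) (n : ℕ) : Prop :=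
  ∃ φ : X → E n, (∃ K, LipschitzWith K φ) ∧ ∃ C : Fin n → Set (E n),
    (∀ i, IsCone (C i)) ∧ IndepCones C ∧ ∀ i, ∃ ℙ, IsConeAlbertiRep μ φ (C i) ℙ

/-- The collection `𝒮(φ)` of singular sets. -/
def MemScal [MeasurableSpace X] [BorelSpace X] {n : ℕ} (φ : X → E n) (S : Set X) : Prop :=
  MeasurableSet S ∧ ∀ θ ∈ Set.Ioo (0:ℝ) 1, ∃ (m : ℕ) (S' : Fin m → Set X) (w : Fin m → E n),
    S = (⋃ i, S' i) ∧ ∀ i, MeasurableSet (S' i) ∧ ‖w i‖ = 1 ∧ ConeNull φ (cone (w i) θ) (S' i)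

/-- `Lip(f,x) = limsup_{r→0⁺} sup_{d(x,y)≤r} |f(y)-f(x)|/r`. -/
def lipAt (f : X → ℝ) (x : X) : ℝ :=
  Filter.limsup (fun r : ℝ => sSup ((fun y => |f y - f x| / r) '' Metric.closedBall x r))
    (𝓝[>] (0:ℝ))

/-- `ind φ = {x : Lip(D⬝φ, x) > 0 for all D ∈ Sⁿ⁻¹}`. -/
def indSet {n : ℕ} (φ : X → E n) : Set X :=
  {x | ∀ D : E n, ‖D‖ = 1 → 0 < lipAt (fun y => ⟪φ y, D⟫) x}

/-- `f` is differentiable with respect to `φ` at `x₀`, with a unique derivative. -/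
def DiffWrtAt {n : ℕ} (φ : X → E n) (f : X → ℝ) (x₀ : X) : Prop :=
  ∃! L : E n →ₗ[ℝ] ℝ,
    Filter.Tendsto (fun x => |f x - f x₀ - L (φ x - φ x₀)| / dist x x₀) (𝓝[≠] x₀) (𝓝 0)

/-- `(X,d,μ)` is a Lipschitz differentiability space, with all chart dimensions
satisfying the predicate `P`. -/
def IsLipDiffSpaceWith [MeasurableSpace X] (μ : Measure X) (P : ℕ → Prop) : Prop :=
  ∃ (N : ℕ → ℕ) (U : ℕ → Set X) (φ : (i : ℕ) → X → E (N i)),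
    (∀ i, P (N i)) ∧ (∀ i, MeasurableSet (U i)) ∧ (⋃ i, U i) = Set.univ ∧
    (∀ i, ∃ K, LipschitzWith K (φ i)) ∧
    ∀ f : X → ℝ, (∃ K, LipschitzWith K f) →
      ∀ i, ∀ᵐ x ∂μ, x ∈ U i → DiffWrtAt (φ i) f x

/-- `ρ` is an upper gradient of `f`. -/
def IsUpperGradient (f ρ : X → ℝ) : Prop :=
  ∀ γ : ℝ → X, LipschitzOnWith 1 γ (Set.Icc 0 1) →
    |f (γ 1) - f (γ 0)| ≤ ∫ t in Set.Icc (0:ℝ) 1, ρ (γ t)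

/-- `ρ` is a `*`-upper gradient of `f`. -/
def IsStarUpperGradient (f ρ : X → ℝ) : Prop :=
  ∀ γ : Fragment X, LipschitzOnWith 1 γ.fn γ.dom →
    ∀ᵐ t ∂(volume.restrict γ.dom),
      ∀ v : ℝ, HasDerivWithinAt (f ∘ γ.fn) v γ.dom t → |v| ≤ ρ (γ.fn t)

/-- The dyadic cube of side length `2^{-m}` in `[0,1)ⁿ` indexed by `k`. -/
def dyadicCube (n m : ℕ) (k : Fin n → Fin (2 ^ m)) : Set (E n) :=
  {x | ∀ i, (k i : ℝ) / 2 ^ m ≤ x i ∧ x i < ((k i : ℝ) + 1) / 2 ^ m}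


section LoomisWhitney

variable {ι α : Type*} [Fintype ι] [DecidableEq ι] [Fintype α] [MeasurableSpace α]
  [MeasurableSingletonClass α]

lemma lmarginal_count_apply (s : Finset ι) (f : (ι → α) → ℝ≥0∞) (x : ι → α) :
    (∫⋯∫⁻_s, f ∂(fun _ : ι => (Measure.count : Measure α))) x =
      ∑ y : ((i : s) → α), f (Function.updateFinset x s y) := by
  simp [lmarginal, lintegral_fintype]

/-- Loomis–Whitney, one summation variable at a time: the functions `F j` do not depend on the
`j`-th variable. -/
lemma lmarginal_prod_rpow_le (hι : 2 ≤ Fintype.card ι) (F : ι → (ι → α) → ℝ≥0∞)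
    (hF : ∀ j x a, F j (Function.update x j a) = F j x) (s : Finset ι) :
    (∫⋯∫⁻_s, (fun x => ∏ j, F j x ^ (1 / ((Fintype.card ι : ℝ) - 1)))
        ∂(fun _ : ι => (Measure.count : Measure α))) ≤
      fun x => ∏ j, ((∫⋯∫⁻_(s.erase j), F j ∂(fun _ : ι => (Measure.count : Measure α))) x)
        ^ (1 / ((Fintype.card ι : ℝ) - 1)) := by
  have hn : (2 : ℝ) ≤ Fintype.card ι := by exact_mod_cast hι
  induction s using Finset.induction_on with
  | empty => simp
  | insert i s hi ih =>
    intro x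
    set p : ℝ := 1 / ((Fintype.card ι : ℝ) - 1) with hp
    have hp0 : 0 ≤ p := by rw [hp]; apply one_div_nonneg.2; linarith
    rw [lmarginal_insert _ .of_discrete hi]
    refine (lintegral_mono fun xi => ih (Function.update x i xi)).trans ?_
    simp only [← Finset.mul_prod_erase Finset.univ _ (Finset.mem_univ i)]
    have hi1 : ∀ xi, (∫⋯∫⁻_(s.erase i), F i ∂(fun _ : ι => (Measure.count : Measure α)))
        (Function.update x i xi) =
        (∫⋯∫⁻_((insert i s).erase i), F i ∂(fun _ : ι => (Measure.count : Measure α))) x := by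
      intro xi
      rw [Finset.erase_insert hi, Finset.erase_eq_of_notMem hi,
        lmarginal_update_of_notMem .of_discrete hi]
      congr 1
      ext y
      exact hF i y xi
    have hj : ∀ j ∈ Finset.univ.erase i,
        (∫⋯∫⁻_((insert i s).erase j), F j ∂(fun _ : ι => (Measure.count : Measure α))) x =
        ∫⁻ xi, (∫⋯∫⁻_(s.erase j), F j ∂(fun _ : ι => (Measure.count : Measure α)))
          (Function.update x i xi) ∂Measure.count := by
      intro j hj
      rw [Finset.erase_insert_of_ne (Finset.ne_of_mem_erase hj).symm,
        lmarginal_insert _ .of_discrete (fun h => hi (Finset.mem_of_mem_erase h))]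
    simp only [hi1]
    rw [lintegral_const_mul _ .of_discrete,
      Finset.prod_congr rfl (fun j hjm => by rw [hj j hjm])]
    gcongr
    refine ENNReal.lintegral_prod_norm_pow_le _ (fun _ _ => Measurable.of_discrete.aemeasurable)
      ?_ (fun _ _ => hp0)
    rw [Finset.sum_const, Finset.card_erase_of_mem (Finset.mem_univ i), Finset.card_univ,
      nsmul_eq_mul, Nat.cast_sub (by omega), hp]
    push_cast
    rw [mul_one_div_cancel]
    linarith

/-- The discrete Loomis–Whitney inequality. -/
lemma sum_prod_rpow_le (hι : 2 ≤ Fintype.card ι) (F : ι → (ι → α) → ℝ≥0∞)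
    (hF : ∀ j x a, F j (Function.update x j a) = F j x) (x₀ : ι → α) :
    ∑ x : ι → α, ∏ j, F j x ^ (1 / ((Fintype.card ι : ℝ) - 1)) ≤
      ∏ j, (∑ y : ((i : Finset.univ.erase j) → α),
        F j (Function.updateFinset x₀ (Finset.univ.erase j) y))
          ^ (1 / ((Fintype.card ι : ℝ) - 1)) := by
  have h := lmarginal_prod_rpow_le hι F hF Finset.univ x₀
  simp only [lmarginal_univ] at h
  simp only [lmarginal_count_apply] at h
  simpa [lintegral_fintype] using h

end LoomisWhitney

/-- The set of fragments whose image meets `S`. -/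
def hitting (S : Set X) : Set (Fragment X) := {γ | (γ.im ∩ S).Nonempty}

lemma hitting_mono {S T : Set X} (h : S ⊆ T) : hitting S ⊆ hitting T :=
  fun _ hγ => hγ.mono (inter_subset_inter_right _ h)

lemma isClosed_hitting {S : Set X} (hS : IsClosed S) : IsClosed (hitting S) := by
  have e : hitting S = {γ : Fragment X | ((γ.1 : Set (ℝ × X)) ∩ Prod.snd ⁻¹' S).Nonempty} := by
    ext γ
    constructor
    · rintro ⟨_, ⟨q, hq, rfl⟩, hx⟩
      exact ⟨q, hq, hx⟩
    · rintro ⟨q, hq, hx⟩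
      exact ⟨q.2, ⟨q, hq, rfl⟩, hx⟩
  rw [e]
  exact (TopologicalSpace.NonemptyCompacts.isClosed_inter_nonempty_of_isClosed
    (hS.preimage (continuous_snd : Continuous (Prod.snd : ℝ × X → X)))).preimage
    (continuous_subtype_val : Continuous
      (Subtype.val : {G : TopologicalSpace.NonemptyCompacts (ℝ × X) //
        IsFragmentGraph X (G : Set (ℝ × X))} → _))

lemma Fragment.mk_fn_mem_graph {γ : Fragment X} {t : ℝ} (ht : t ∈ γ.dom) :
    (t, γ.fn t) ∈ γ.graph := by
  have h : ∃ x, (t, x) ∈ γ.graph := by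
    obtain ⟨q, hq, rfl⟩ := ht
    exact ⟨q.2, hq⟩
  rw [Fragment.fn, dif_pos h]
  exact h.choose_spec

lemma Fragment.measure_le [MeasurableSpace X] (γ : Fragment X) {B : Set X}
    (hB : MeasurableSet B) : γ.measure B ≤ volume (γ.dom ∩ γ.fn ⁻¹' B) := by
  by_cases hf : AEMeasurable γ.fn (volume.restrict γ.dom)
  · rw [Fragment.measure, Measure.map_apply_of_aemeasurable hf hB]
    have hd : MeasurableSet γ.dom := (γ.1.isCompact.image continuous_fst).measurableSet
    rw [Measure.restrict_apply' hd, inter_comm]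
  · rw [Fragment.measure, Measure.map_of_not_aemeasurable hf]
    simp

lemma Fragment.measure_le_indicator [MeasurableSpace X] (γ : Fragment X) {B S : Set X}
    (hB : MeasurableSet B) (hBS : B ⊆ S) {d : ℝ} (hd : ∀ x ∈ B, ∀ y ∈ B, dist x y ≤ d) :
    γ.measure B ≤ (hitting S).indicator (fun _ => ENNReal.ofReal (2 * d)) γ := by
  refine (γ.measure_le hB).trans ?_
  by_cases h : γ ∈ hitting S
  · rw [indicator_of_mem h]
    refine (Real.volume_le_diam _).trans (ediam_le ?_)
    rintro s ⟨hs, hs'⟩ t ⟨ht, ht'⟩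
    rw [edist_dist]
    apply ENNReal.ofReal_le_ofReal
    rw [Real.dist_eq]
    have := (γ.2.2 _ (mk_fn_mem_graph hs) _ (mk_fn_mem_graph ht)).1
    have := hd _ hs' _ ht'
    simp only at *
    linarith
  · rw [indicator_of_notMem h, nonpos_iff_eq_zero]
    convert measure_empty (μ := volume)
    rw [eq_empty_iff_forall_notMem]
    rintro t ⟨ht, htB⟩
    exact h ⟨γ.fn t, ⟨_, mk_fn_mem_graph ht, rfl⟩, hBS htB⟩

lemma nu_apply_le [MeasurableSpace X] [BorelSpace X] (ℙ : Measure (Fragment X)) {B S : Set X}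
    (hB : MeasurableSet B) (hS : IsClosed S) (hBS : B ⊆ S) {d : ℝ}
    (hd : ∀ x ∈ B, ∀ y ∈ B, dist x y ≤ d) :
    nu ℙ B ≤ ENNReal.ofReal (2 * d) * ℙ (hitting S) := by
  refine (Measure.bind_apply_le _ hB).trans ?_
  refine (lintegral_mono fun γ => γ.measure_le_indicator hB hBS hd).trans ?_
  rw [lintegral_indicator_const (isClosed_hitting hS).measurableSet]

/-- The closed cube of side length `1 / N` with corner `k / N`. -/
def closedCube (n N : ℕ) (k : Fin n → ℕ) : Set (E n) :=
  {x | ∀ i, (k i : ℝ) / N ≤ x i ∧ x i ≤ ((k i : ℝ) + 1) / N}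

/-- Inside the cube of side `1 / N` at `a`, the tube in direction `e_j` made of the subcubes of
side `1 / (N * R)` whose index in the directions other than `j` is `b`. -/
def tube {n : ℕ} (N R : ℕ) (a : Fin n → ℕ) (j : Fin n) (b : Fin n → ℕ) : Set (E n) :=
  closedCube n N a ∩ {x | ∀ i, i ≠ j →
    ((b i : ℝ) + R * a i) / (N * R) ≤ x i ∧ x i ≤ ((b i : ℝ) + R * a i + 1) / (N * R)}

lemma isClosed_closedCube (n N : ℕ) (k : Fin n → ℕ) : IsClosed (closedCube n N k) := by
  simp only [closedCube, ofPred_forall, ofPred_and]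
  refine isClosed_iInter fun i => (isClosed_le (by fun_prop) (by fun_prop)).inter
    (isClosed_le (by fun_prop) (by fun_prop))

lemma isClosed_tube {n : ℕ} (N R : ℕ) (a : Fin n → ℕ) (j : Fin n) (b : Fin n → ℕ) :
    IsClosed (tube N R a j b) := by
  refine (isClosed_closedCube n N a).inter ?_
  simp only [ofPred_forall, ofPred_and]
  refine isClosed_iInter fun i => isClosed_iInter fun _ =>
    (isClosed_le (by fun_prop) (by fun_prop)).inter (isClosed_le (by fun_prop) (by fun_prop))

lemma closedCube_subset_tube {n N R : ℕ} (hN : 0 < N) (a : Fin n → ℕ) (j : Fin n)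
    (b : Fin n → ℕ) (hb : ∀ i, b i < R) :
    closedCube n (N * R) (fun i => b i + R * a i) ⊆ tube N R a j b := by
  intro x hx
  have hN' : (0 : ℝ) < N := by exact_mod_cast hN
  refine ⟨fun i => ?_, fun i _ => ?_⟩
  · have hR : (0 : ℝ) < R := by exact_mod_cast (Nat.zero_le _).trans_lt (hb i)
    have hb' : (b i : ℝ) + 1 ≤ R := by exact_mod_cast hb i
    obtain ⟨h1, h2⟩ := hx i
    push_cast at h1 h2
    rw [div_le_iff₀ (by positivity)] at h1
    rw [le_div_iff₀ (by positivity)] at h2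
    constructor
    · rw [div_le_iff₀ hN']
      refine le_of_mul_le_mul_right ?_ hR
      have : (0 : ℝ) ≤ b i := by positivity
      linarith
    · rw [le_div_iff₀ hN']
      refine le_of_mul_le_mul_right ?_ hR
      linarith
  · have := hx i
    push_cast at this
    exact this

/-- Fragments that, in the directions other than `e_j`, move at most `1 / R` times as much as
they do in direction `e_j`. -/
def IsAlmostParallel {n : ℕ} (R : ℕ) (j : Fin n) (γ : Fragment (E n)) : Prop :=
  ∀ x ∈ γ.im, ∀ y ∈ γ.im, ∀ i, i ≠ j → R * |x i - y i| ≤ |x j - y j|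

lemma IsAlmostParallel.le_add_two {n N R : ℕ} (hN : 0 < N) (hR : 0 < R) {j : Fin n}
    {γ : Fragment (E n)} (hγ : IsAlmostParallel R j γ) {a b c : Fin n → ℕ}
    (hb : γ ∈ hitting (tube N R a j b)) (hc : γ ∈ hitting (tube N R a j c))
    {i : Fin n} (hi : i ≠ j) : b i ≤ c i + 2 := by
  obtain ⟨x, hxγ, hxa, hxb⟩ := hb
  obtain ⟨y, hyγ, hya, hyc⟩ := hc
  have hN' : (0 : ℝ) < N := by exact_mod_cast hN
  have hR' : (0 : ℝ) < R := by exact_mod_cast hR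
  have h1 := hγ x hxγ y hyγ i hi
  have h2 : N * |x j - y j| ≤ 1 := by
    obtain ⟨h3, h4⟩ := hxa j
    obtain ⟨h5, h6⟩ := hya j
    rw [div_le_iff₀ hN'] at h3 h5
    rw [le_div_iff₀ hN'] at h4 h6
    rw [← abs_of_pos hN', ← abs_mul, abs_le]
    constructor <;> nlinarith
  have h3 : N * (R * |x i - y i|) ≤ 1 := (mul_le_mul_of_nonneg_left h1 hN'.le).trans h2
  have h4 : N * R * (x i - y i) ≤ 1 := by
    refine le_trans ?_ h3
    rw [← mul_assoc]
    exact mul_le_mul_of_nonneg_left (le_abs_self _) (by positivity)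
  have h5 := (hxb i hi).1
  have h6 := (hyc i hi).2
  rw [div_le_iff₀ (by positivity)] at h5
  rw [le_div_iff₀ (by positivity)] at h6
  have : (b i : ℝ) ≤ c i + 2 := by linarith
  exact_mod_cast this

lemma card_filter_le_five {R : ℕ} (c : ℕ) :
    (Finset.univ.filter fun b : Fin R => (b : ℕ) ≤ c + 2 ∧ c ≤ b + 2).card ≤ 5 := by
  calc _ ≤ (Finset.Icc (c - 2) (c + 2)).card := by
        refine Finset.card_le_card_of_injOn (fun b : Fin R => (b : ℕ)) ?_ Fin.val_injective.injOn
        intro b hb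
        simp only [Finset.coe_filter, Finset.mem_univ, true_and, mem_ofPred_eq] at hb
        simp only [Finset.coe_Icc, mem_Icc]
        omega
    _ ≤ 5 := by simp; omega

open Classical in
lemma IsAlmostParallel.card_tube_le {n N R : ℕ} (hN : 0 < N) (hR : 0 < R) {j : Fin n}
    {γ : Fragment (E n)} (hγ : IsAlmostParallel R j γ) (a : Fin n → ℕ) (x₀ : Fin n → Fin R) :
    (Finset.univ.filter fun y : (i : Finset.univ.erase j) → Fin R =>
      γ ∈ hitting (tube N R a j
        (fun i => Function.updateFinset x₀ (Finset.univ.erase j) y i))).card ≤ 5 ^ n := by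
  rcases Finset.eq_empty_or_nonempty (Finset.univ.filter fun y : (i : Finset.univ.erase j) →
    Fin R => γ ∈ hitting (tube N R a j
        (fun i => Function.updateFinset x₀ (Finset.univ.erase j) y i))) with h | ⟨z, hz⟩
  · rw [h]
    simp
  · simp only [Finset.mem_filter, Finset.mem_univ, true_and] at hz
    calc _ ≤ (Fintype.piFinset fun i : (Finset.univ.erase j) =>
          Finset.univ.filter fun b : Fin R => (b : ℕ) ≤ z i + 2 ∧ (z i : ℕ) ≤ b + 2).card := by
          refine Finset.card_le_card fun y hy => ?_
          simp only [Finset.mem_filter, Finset.mem_univ, true_and] at hy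
          simp only [Fintype.mem_piFinset, Finset.mem_filter, Finset.mem_univ, true_and]
          intro i
          have hij := Finset.ne_of_mem_erase i.2
          have h1 := hγ.le_add_two hN hR hy hz hij
          have h2 := hγ.le_add_two hN hR hz hy hij
          simp only [Function.updateFinset, i.2, dif_pos] at h1 h2
          exact ⟨h1, h2⟩
      _ ≤ ∏ _i : (Finset.univ.erase j), 5 := by
          rw [Fintype.card_piFinset]
          exact Finset.prod_le_prod' fun i _ => card_filter_le_five _
      _ ≤ 5 ^ n := by
          rw [Finset.prod_const, Finset.card_univ, Fintype.card_coe]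
          refine Nat.pow_le_pow_right (by norm_num) ((Finset.card_le_univ _).trans ?_)
          simp

lemma sum_measure_tube_le {n N R : ℕ} (hN : 0 < N) (hR : 0 < R) {j : Fin n}
    {ℙ : Measure (Fragment (E n))} (hℙ : ∀ᵐ γ ∂ℙ, IsAlmostParallel R j γ) (a : Fin n → ℕ)
    (x₀ : Fin n → Fin R) :
    ∑ y : (i : Finset.univ.erase j) → Fin R, ℙ (hitting (tube N R a j
        (fun i => Function.updateFinset x₀ (Finset.univ.erase j) y i))) ≤
      5 ^ n * ℙ (hitting (closedCube n N a)) := by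
  classical
  have hm : ∀ b, MeasurableSet (hitting (tube N R a j b)) :=
    fun b => (isClosed_hitting (isClosed_tube N R a j b)).measurableSet
  rw [Finset.sum_congr rfl fun y _ => (lintegral_indicator_one (μ := ℙ) (hm _)).symm,
    ← lintegral_finsetSum _ fun y _ => measurable_one.indicator (hm _),
    ← lintegral_indicator_const
      (isClosed_hitting (isClosed_closedCube n N a)).measurableSet]
  refine lintegral_mono_ae (hℙ.mono fun γ hγ => ?_)
  by_cases h : γ ∈ hitting (closedCube n N a)
  · rw [indicator_of_mem h]
    simp only [indicator_apply, Pi.one_apply, Finset.sum_boole]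
    exact_mod_cast hγ.card_tube_le hN hR a x₀
  · rw [indicator_of_notMem h, nonpos_iff_eq_zero]
    refine Finset.sum_eq_zero fun y _ => indicator_of_notMem (fun hy => h ?_) _
    exact hitting_mono inter_subset_left hy

/-- The multilinear Kakeya functional at scale `1 / N`. -/
def kakeyaSum {n : ℕ} (ℙ : Fin n → Measure (Fragment (E n))) (N : ℕ) : ℝ≥0∞ :=
  ∑ k : Fin n → Fin N, ∏ j, ℙ j (hitting (closedCube n N (fun i => k i))) ^ (1 / ((n : ℝ) - 1))

lemma sum_children_le {n N R : ℕ} (hn : 2 ≤ n) (hN : 0 < N) (hR : 0 < R)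
    {ℙ : Fin n → Measure (Fragment (E n))} (hℙ : ∀ j, ∀ᵐ γ ∂ℙ j, IsAlmostParallel R j γ)
    (a : Fin n → ℕ) :
    ∑ b : Fin n → Fin R, ∏ j, ℙ j (hitting (closedCube n (N * R) (fun i => b i + R * a i)))
        ^ (1 / ((n : ℝ) - 1)) ≤
      5 ^ (n * n) * ∏ j, ℙ j (hitting (closedCube n N a)) ^ (1 / ((n : ℝ) - 1)) := by
  have hn' : (2 : ℝ) ≤ n := by exact_mod_cast hn
  have hp0 : (0 : ℝ) ≤ 1 / ((n : ℝ) - 1) := one_div_nonneg.2 (by linarith)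
  have hp1 : 1 / ((n : ℝ) - 1) ≤ 1 := by rw [div_le_one] <;> linarith
  have x₀ : Fin n → Fin R := fun _ => ⟨0, hR⟩
  have hLW := sum_prod_rpow_le (ι := Fin n) (α := Fin R) (by simpa using hn)
    (fun j b => ℙ j (hitting (tube N R a j (fun i => b i)))) (fun j x c => by
      have h : tube N R a j (fun i => Function.update x j c i) =
          tube N R a j (fun i => x i) := by
        rw [tube, tube]
        congr 1
        ext y
        refine forall₂_congr fun i hi => ?_
        rw [Function.update_of_ne hi]
      rw [h]) x₀
  rw [Fintype.card_fin] at hLW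
  calc _ ≤ ∑ b : Fin n → Fin R, ∏ j, ℙ j (hitting (tube N R a j (fun i => b i)))
        ^ (1 / ((n : ℝ) - 1)) := by
        gcongr with b _ j _
        exact hitting_mono (closedCube_subset_tube hN a j _ fun i => (b i).2)
    _ ≤ _ := hLW
    _ ≤ ∏ j, (5 ^ n * ℙ j (hitting (closedCube n N a))) ^ (1 / ((n : ℝ) - 1)) := by
        gcongr with j _
        exact sum_measure_tube_le hN hR (hℙ j) a x₀
    _ = ∏ j : Fin n, (5 ^ n : ℝ≥0∞) ^ (1 / ((n : ℝ) - 1)) *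
          ℙ j (hitting (closedCube n N a)) ^ (1 / ((n : ℝ) - 1)) :=
        Finset.prod_congr rfl fun j _ => ENNReal.mul_rpow_of_nonneg _ _ hp0
    _ ≤ ∏ j : Fin n, 5 ^ n * ℙ j (hitting (closedCube n N a)) ^ (1 / ((n : ℝ) - 1)) := by
        gcongr with j _
        refine (ENNReal.rpow_le_rpow_of_exponent_le ?_ hp1).trans_eq (ENNReal.rpow_one _)
        exact one_le_pow₀ (by norm_num)
    _ = _ := by
        rw [Finset.prod_mul_distrib, Finset.prod_const, Finset.card_univ, Fintype.card_fin,
          ← pow_mul]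

lemma kakeyaSum_mul_le {n N R : ℕ} (hn : 2 ≤ n) (hN : 0 < N) (hR : 0 < R)
    {ℙ : Fin n → Measure (Fragment (E n))} (hℙ : ∀ j, ∀ᵐ γ ∂ℙ j, IsAlmostParallel R j γ) :
    kakeyaSum ℙ (N * R) ≤ 5 ^ (n * n) * kakeyaSum ℙ N := by
  let e : (Fin n → Fin N) × (Fin n → Fin R) ≃ (Fin n → Fin (N * R)) :=
    (Equiv.arrowProdEquivProdArrow _ _ _).symm.trans
      (Equiv.arrowCongr (Equiv.refl _) finProdFinEquiv)
  have he : ∀ a b i, (e (a, b) i : ℕ) = b i + R * a i := fun a b i => rfl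
  rw [kakeyaSum, kakeyaSum, ← e.sum_comp, Fintype.sum_prod_type, Finset.mul_sum]
  gcongr with a _
  simp only [he]
  exact sum_children_le hn hN hR hℙ _

lemma kakeyaSum_mul_pow_le {n N R : ℕ} (hn : 2 ≤ n) (hN : 0 < N) (hR : 0 < R)
    {ℙ : Fin n → Measure (Fragment (E n))} (hℙ : ∀ j, ∀ᵐ γ ∂ℙ j, IsAlmostParallel R j γ) (q : ℕ) :
    kakeyaSum ℙ (N * R ^ q) ≤ (5 ^ (n * n)) ^ q * kakeyaSum ℙ N := by
  induction q with
  | zero => simp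
  | succ q ih =>
    rw [pow_succ, ← mul_assoc]
    refine (kakeyaSum_mul_le hn (by positivity) hR hℙ).trans ?_
    rw [pow_succ', mul_assoc]
    gcongr

lemma kakeyaSum_le {n : ℕ} (hn : 2 ≤ n) {ℙ : Fin n → Measure (Fragment (E n))}
    (hℙ : ∀ j, IsProbabilityMeasure (ℙ j)) (N : ℕ) : kakeyaSum ℙ N ≤ N ^ n := by
  have hn' : (2 : ℝ) ≤ n := by exact_mod_cast hn
  have hp0 : (0 : ℝ) ≤ 1 / ((n : ℝ) - 1) := one_div_nonneg.2 (by linarith)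
  calc kakeyaSum ℙ N ≤ ∑ _k : Fin n → Fin N, 1 := by
        unfold kakeyaSum
        gcongr with k _
        exact Finset.prod_le_one' fun j _ => ENNReal.rpow_le_one prob_le_one hp0
    _ = N ^ n := by simp

lemma norm_le_of_mem_cone {n : ℕ} {δ : ℝ} {R : ℕ} (hδ : δ < 1 / 4) (hR : 4 * δ * R ^ 2 ≤ 1)
    {i j : Fin n} (hij : i ≠ j) {v : E n} (hv : v ∈ cone (EuclideanSpace.single j 1) (1 - δ)) :
    R * |v i| ≤ |v j| := by
  have h1 : (1 - δ) * ‖v‖ ≤ |v j| := by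
    have h : (1 - δ) * ‖v‖ ≤ |⟪v, EuclideanSpace.single j (1 : ℝ)⟫| := hv
    rw [EuclideanSpace.inner_single_right] at h
    simpa using h
  have h2 : v i ^ 2 + v j ^ 2 ≤ ‖v‖ ^ 2 := by
    rw [EuclideanSpace.real_norm_sq_eq, ← Finset.sum_pair hij (f := fun k => v k ^ 2)]
    exact Finset.sum_le_sum_of_subset_of_nonneg (Finset.subset_univ _) fun _ _ _ => sq_nonneg _
  have h3 : (1 - 2 * δ) * ‖v‖ ^ 2 ≤ v j ^ 2 := by
    have h := pow_le_pow_left₀ (mul_nonneg (by linarith) (norm_nonneg v)) h1 2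
    rw [sq_abs] at h
    nlinarith [mul_nonneg (sq_nonneg δ) (sq_nonneg ‖v‖)]
  have h4 : v i ^ 2 ≤ 2 * δ * ‖v‖ ^ 2 := by linarith
  have h5 : ‖v‖ ^ 2 ≤ 2 * v j ^ 2 := by nlinarith [sq_nonneg ‖v‖]
  refine abs_le_of_sq_le_sq' ?_ (abs_nonneg _) |>.2
  rw [mul_pow, sq_abs, sq_abs]
  calc (R : ℝ) ^ 2 * v i ^ 2 ≤ R ^ 2 * (2 * δ * ‖v‖ ^ 2) := by gcongr
    _ = (4 * δ * R ^ 2) * (‖v‖ ^ 2 / 2) := by ring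
    _ ≤ 1 * (‖v‖ ^ 2 / 2) := by gcongr
    _ ≤ v j ^ 2 := by linarith

lemma IsConeCurve.isAlmostParallel {n : ℕ} {δ : ℝ} {R : ℕ} (hδ : δ < 1 / 4)
    (hR : 4 * δ * R ^ 2 ≤ 1) {j : Fin n} {γ : Fragment (E n)}
    (hγ : IsConeCurve (id : E n → E n) (cone (EuclideanSpace.single j 1) (1 - δ)) γ) :
    IsAlmostParallel R j γ := by
  obtain ⟨_, _, h⟩ := hγ
  rintro _ ⟨p, hp, rfl⟩ _ ⟨q, hq, rfl⟩ i hij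
  exact norm_le_of_mem_cone hδ hR hij (h p hp q hq).1

lemma measurableSet_dyadicCube (n m : ℕ) (k : Fin n → Fin (2 ^ m)) :
    MeasurableSet (dyadicCube n m k) := by
  simp only [dyadicCube, ofPred_forall, ofPred_and]
  exact MeasurableSet.iInter fun i =>
    (measurableSet_le measurable_const (by fun_prop)).inter
      (measurableSet_lt (by fun_prop) measurable_const)

lemma dyadicCube_subset_closedCube (n m : ℕ) (k : Fin n → Fin (2 ^ m)) :
    dyadicCube n m k ⊆ closedCube n (2 ^ m) (fun i => k i) := by
  intro x hx i
  push_cast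
  exact ⟨(hx i).1, (hx i).2.le⟩

lemma dist_le_of_mem_dyadicCube {n m : ℕ} {k : Fin n → Fin (2 ^ m)} {x y : E n}
    (hx : x ∈ dyadicCube n m k) (hy : y ∈ dyadicCube n m k) : dist x y ≤ n * (1 / 2 ^ m) := by
  have h : ∀ i, dist (x i) (y i) ^ 2 ≤ (1 / 2 ^ m) ^ 2 := by
    intro i
    have := hx i
    have := hy i
    rw [add_div] at *
    refine pow_le_pow_left₀ dist_nonneg ?_ 2
    rw [Real.dist_eq, abs_le]
    constructor <;> linarith
  rw [EuclideanSpace.dist_eq]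
  refine Real.sqrt_le_iff.2 ⟨by positivity, ?_⟩
  calc ∑ i, dist (x i) (y i) ^ 2 ≤ ∑ _i : Fin n, ((1 : ℝ) / 2 ^ m) ^ 2 :=
        Finset.sum_le_sum fun i _ => h i
    _ = n * (1 / 2 ^ m) ^ 2 := by simp
    _ ≤ n ^ 2 * (1 / 2 ^ m) ^ 2 := by
        gcongr
        exact_mod_cast Nat.le_self_pow two_ne_zero n
    _ = _ := by ring

lemma measure_dyadicCube_le {n m : ℕ} {μ : Measure (E n)} {M : ℝ}
    {ℙ : Measure (Fragment (E n))} [IsProbabilityMeasure ℙ] (hM : 0 < M)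
    (h : μ ≤ ENNReal.ofReal M • nu ℙ) (k : Fin n → Fin (2 ^ m)) :
    (μ (dyadicCube n m k)).toReal ≤
      M * (2 * n * (1 / 2 ^ m)) * (ℙ (hitting (closedCube n (2 ^ m) (fun i => k i)))).toReal := by
  have h1 := (h (dyadicCube n m k)).trans (mul_le_mul_right (nu_apply_le ℙ
    (measurableSet_dyadicCube n m k) (isClosed_closedCube _ _ _)
    (dyadicCube_subset_closedCube n m k)
    (fun x hx y hy => dist_le_of_mem_dyadicCube hx hy)) _)
  have h2 := ENNReal.toReal_mono (by finiteness) h1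
  rw [ENNReal.toReal_mul, ENNReal.toReal_mul, ENNReal.toReal_ofReal hM.le,
    ENNReal.toReal_ofReal (by positivity)] at h2
  refine h2.trans_eq ?_
  ring

/-- The normalized term of the dyadic sum, for `h` the side length of the cube. -/
lemma rpow_mul_le_prod {n : ℕ} (hn : 2 ≤ n) {x h : ℝ} (hx : 0 ≤ x) (hh : 0 < h)
    {M G : Fin n → ℝ} (hM : ∀ j, 0 ≤ M j) (hG : ∀ j, 0 ≤ G j)
    (hxM : ∀ j, x ≤ M j * (2 * n * h) * G j) :
    (x / h ^ n) ^ ((n : ℝ) / (n - 1)) * h ^ n ≤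
      ((2 * n : ℝ) ^ (1 / ((n : ℝ) - 1))) ^ n * (∏ j, M j ^ (1 / ((n : ℝ) - 1))) *
        ∏ j, G j ^ (1 / ((n : ℝ) - 1)) := by
  have hn' : (2 : ℝ) ≤ n := by exact_mod_cast hn
  set p : ℝ := 1 / ((n : ℝ) - 1) with hp
  have hp0 : 0 ≤ p := by rw [hp]; apply one_div_nonneg.2; linarith
  have hy : 0 ≤ x / h ^ n := by positivity
  have hpow : (h / h ^ n) ^ p = h⁻¹ := by
    have e : h / h ^ n = h ^ (1 - (n : ℝ)) := by
      rw [Real.rpow_sub hh, Real.rpow_one, Real.rpow_natCast]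
    rw [e, ← Real.rpow_mul hh.le, ← Real.rpow_neg_one]
    congr 1
    rw [hp]
    have : (n : ℝ) - 1 ≠ 0 := by linarith
    field_simp
    ring
  have e : (x / h ^ n) ^ ((n : ℝ) / (n - 1)) = ∏ _j : Fin n, (x / h ^ n) ^ p := by
    rw [Finset.prod_const, Finset.card_univ, Fintype.card_fin,
      ← Real.rpow_natCast (_ ^ p), ← Real.rpow_mul hy, hp]
    congr 1
    ring
  have hj : ∀ j, (x / h ^ n) ^ p ≤ (2 * n : ℝ) ^ p * h⁻¹ * (M j ^ p * G j ^ p) := by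
    intro j
    rw [← hpow, ← Real.mul_rpow (by positivity) (by positivity),
      ← Real.mul_rpow (hM j) (hG j),
      ← Real.mul_rpow (by positivity) (mul_nonneg (hM j) (hG j))]
    refine Real.rpow_le_rpow hy ?_ hp0
    calc x / h ^ n ≤ (M j * (2 * n * h) * G j) / h ^ n := by gcongr; exact hxM j
      _ = _ := by ring
  rw [e]
  calc (∏ _j : Fin n, (x / h ^ n) ^ p) * h ^ n
      ≤ (∏ j : Fin n, (2 * n : ℝ) ^ p * h⁻¹ * (M j ^ p * G j ^ p)) * h ^ n := by
        gcongr with j _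
        exact hj j
    _ = _ := by
        simp only [Finset.prod_mul_distrib, Finset.prod_const, Finset.card_univ,
          Fintype.card_fin, inv_pow]
        have : h ^ n ≠ 0 := by positivity
        field_simp

lemma exists_scale (n : ℕ) (hn : 2 ≤ n) (ε : ℝ) (hε : 0 < ε) :
    ∃ r : ℕ, 0 < r ∧ (5 : ℝ) ^ (n * n) ≤ 2 ^ ((r : ℝ) * ε) := by
  refine ⟨⌈3 * (n * n : ℕ) / ε⌉₊, Nat.ceil_pos.2 (by positivity), ?_⟩
  calc (5 : ℝ) ^ (n * n) ≤ (2 ^ 3) ^ (n * n) := by gcongr; norm_num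
    _ = 2 ^ ((3 * (n * n : ℕ) : ℝ)) := by
        rw [← pow_mul, ← Real.rpow_natCast]
        push_cast
        rfl
    _ ≤ _ := by
        refine Real.rpow_le_rpow_of_exponent_le one_le_two ?_
        rw [← div_le_iff₀ hε]
        exact Nat.le_ceil _

lemma toReal_kakeyaSum_le {n r : ℕ} (hn : 2 ≤ n) {ε : ℝ} (hε : 0 < ε) (hr : 0 < r)
    (h5 : (5 : ℝ) ^ (n * n) ≤ 2 ^ ((r : ℝ) * ε))
    {ℙ : Fin n → Measure (Fragment (E n))} (hℙ1 : ∀ j, IsProbabilityMeasure (ℙ j))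
    (hℙ : ∀ j, ∀ᵐ γ ∂ℙ j, IsAlmostParallel (2 ^ r) j γ) (m : ℕ) :
    (kakeyaSum ℙ (2 ^ m)).toReal ≤ 2 ^ (r * n) * 2 ^ ((m : ℝ) * ε) := by
  have hm : 2 ^ m = 2 ^ (m % r) * (2 ^ r) ^ (m / r) := by
    rw [← pow_mul, ← pow_add, Nat.mod_add_div]
  have h1 : kakeyaSum ℙ (2 ^ m) ≤ (5 ^ (n * n)) ^ (m / r) * ((2 ^ (m % r) : ℕ) : ℝ≥0∞) ^ n := by
    rw [hm]
    refine (kakeyaSum_mul_pow_le hn (by positivity) (by positivity) hℙ _).trans ?_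
    gcongr
    exact kakeyaSum_le hn hℙ1 _
  have h2 := ENNReal.toReal_mono (by finiteness) h1
  have h3 : (((m / r : ℕ) : ℝ)) * r ≤ m := by exact_mod_cast Nat.div_mul_le_self m r
  calc (kakeyaSum ℙ (2 ^ m)).toReal ≤ ((5 : ℝ) ^ (n * n)) ^ (m / r) * (2 ^ (m % r)) ^ n := by
        simpa using h2
    _ ≤ (2 ^ ((r : ℝ) * ε)) ^ (m / r) * (2 ^ r) ^ n := by
        gcongr
        · norm_num
        · exact (Nat.mod_lt _ hr).le
    _ ≤ 2 ^ ((m : ℝ) * ε) * (2 ^ r) ^ n := by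
        gcongr
        rw [← Real.rpow_natCast, ← Real.rpow_mul zero_le_two]
        refine Real.rpow_le_rpow_of_exponent_le one_le_two ?_
        nlinarith
    _ = _ := by rw [pow_mul, mul_comm]

lemma toReal_kakeyaSum {n : ℕ} (hn : 2 ≤ n) {ℙ : Fin n → Measure (Fragment (E n))}
    (hℙ : ∀ j, IsProbabilityMeasure (ℙ j)) (N : ℕ) :
    (kakeyaSum ℙ N).toReal = ∑ k : Fin n → Fin N, ∏ j,
      (ℙ j (hitting (closedCube n N (fun i => k i)))).toReal ^ (1 / ((n : ℝ) - 1)) := by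
  have hn' : (2 : ℝ) ≤ n := by exact_mod_cast hn
  have hp0 : (0 : ℝ) ≤ 1 / ((n : ℝ) - 1) := one_div_nonneg.2 (by linarith)
  rw [kakeyaSum, ENNReal.toReal_sum]
  · simp only [ENNReal.toReal_prod, ENNReal.toReal_rpow]
  · intro k _
    exact ENNReal.prod_ne_top fun j _ => ENNReal.rpow_ne_top_of_nonneg hp0 (measure_ne_top _ _)

/-- Multilinear Kakeya estimate for measures dominated by `ν(ℙⱼ)` with
`ℙⱼ` concentrated on `C(eⱼ, 1-δ)`-curves: for every `ε > 0` there is `δ ∈ (0,1/4)` and a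
constant `K(n,ε)` such that
`∑_{Q ∈ 𝒟_m} (μ(Q)/|Q|)^{n/(n-1)} |Q| ≤ K(n,ε) 2^{mε} ∏ⱼ Mⱼ^{1/(n-1)}` for all `m`. -/
theorem multilinear_kakeya_estimate (n : ℕ) (hn : 2 ≤ n) (ε : ℝ) (hε : 0 < ε) :
    ∃ δ : ℝ, δ ∈ Set.Ioo (0:ℝ) (1/4) ∧ ∃ Kc : ℝ, 0 < Kc ∧
      ∀ (μ : Measure (E n)) (M : Fin n → ℝ), (∀ j, 0 < M j) →
        ∀ ℙ : Fin n → Measure (Fragment (E n)),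
          (∀ j, IsProbabilityMeasure (ℙ j)) →
          (∀ j, (ℙ j) {γ : Fragment (E n) |
            ¬ IsConeCurve (id : E n → E n) (cone (EuclideanSpace.single j 1) (1 - δ)) γ} = 0) →
          (∀ j, μ ≤ ENNReal.ofReal (M j) • nu (ℙ j)) →
          ∀ m : ℕ,
            ∑ k : Fin n → Fin (2 ^ m),
              ((μ (dyadicCube n m k)).toReal / (2:ℝ) ^ (-(m : ℝ) * n)) ^ ((n : ℝ) / (n - 1))
                * (2:ℝ) ^ (-(m : ℝ) * n)
            ≤ Kc * 2 ^ ((m : ℝ) * ε) * ∏ j, (M j) ^ (1 / ((n : ℝ) - 1)) := by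
  obtain ⟨r, hr, h5⟩ := exists_scale n hn ε hε
  have hR : (1 : ℝ) ≤ 2 ^ r := one_le_pow₀ one_le_two
  have hδ : 1 / (8 * (2 ^ r : ℝ) ^ 2) < 1 / 4 := by
    apply one_div_lt_one_div_of_lt (by norm_num)
    nlinarith
  refine ⟨1 / (8 * (2 ^ r : ℝ) ^ 2), ⟨by positivity, hδ⟩,
    ((2 * n : ℝ) ^ (1 / ((n : ℝ) - 1))) ^ n * 2 ^ (r * n), by positivity, ?_⟩
  intro μ M hM ℙ hℙ1 hcone hμ m
  have hpar : ∀ j, ∀ᵐ γ ∂ℙ j, IsAlmostParallel (2 ^ r) j γ := by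
    intro j
    have h : ∀ᵐ γ ∂ℙ j, IsConeCurve (id : E n → E n)
        (cone (EuclideanSpace.single j 1) (1 - 1 / (8 * (2 ^ r : ℝ) ^ 2))) γ := hcone j
    refine h.mono fun γ hγ => hγ.isAlmostParallel hδ ?_
    push_cast
    field_simp
    norm_num
  have hside : (2 : ℝ) ^ (-(m : ℝ) * n) = (1 / 2 ^ m) ^ n := by
    rw [Real.rpow_mul zero_le_two, Real.rpow_natCast, Real.rpow_neg zero_le_two,
      Real.rpow_natCast, one_div]
  rw [hside]
  have hprod : 0 ≤ ∏ j, M j ^ (1 / ((n : ℝ) - 1)) :=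
    Finset.prod_nonneg fun j _ => Real.rpow_nonneg (hM j).le _
  calc _ ≤ ∑ k : Fin n → Fin (2 ^ m), ((2 * n : ℝ) ^ (1 / ((n : ℝ) - 1))) ^ n *
        (∏ j, M j ^ (1 / ((n : ℝ) - 1))) * ∏ j,
          (ℙ j (hitting (closedCube n (2 ^ m) (fun i => k i)))).toReal
            ^ (1 / ((n : ℝ) - 1)) :=
        Finset.sum_le_sum fun k _ => rpow_mul_le_prod hn ENNReal.toReal_nonneg (by positivity)
          (fun j => (hM j).le) (fun j => ENNReal.toReal_nonneg)
          fun j => measure_dyadicCube_le (hM j) (hμ j) k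
    _ = ((2 * n : ℝ) ^ (1 / ((n : ℝ) - 1))) ^ n * (∏ j, M j ^ (1 / ((n : ℝ) - 1))) *
          (kakeyaSum ℙ (2 ^ m)).toReal := by
        rw [toReal_kakeyaSum hn hℙ1, Finset.mul_sum]
    _ ≤ ((2 * n : ℝ) ^ (1 / ((n : ℝ) - 1))) ^ n * (∏ j, M j ^ (1 / ((n : ℝ) - 1))) *
          (2 ^ (r * n) * 2 ^ ((m : ℝ) * ε)) := by
        gcongr
        exact toReal_kakeyaSum_le hn hε hr h5 hℙ1 hpar m
    _ = _ := by ring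

end BKO
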